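/- arXiv:1910.04016 — 3 statements merged into one kernel-verified Lean document; each statement's English description precedes it below -/
import Mathlib

section
/- Let $N\ge 1$ be an integer and $L>0$, $T>0$ real numbers. For $t>0$ set $A_1(t):=(4\pi)^{-N/2}\int_{\{x\in\mathbb{R}^N:|x|<1/\sqrt t\}}e^{-|x|^2/4}\,dx$ and $C_N:=2/\Gamma(N/2)$ ($\Gamma$ the Euler Gamma function). Then $\int_0^{T}\frac{e^{-s}}{A_1(s/L^2)}\,ds = 1-\frac{e^{-T}}{A_1(T/L^2)}+\frac{C_N}{2^{N+1}}\int_0^{T/L^2} \frac{e^{-L^2 z-\frac{1}{4z}}}{A_1(z)^2}\, z^{-\frac{N+2}{2}}\,dz$. -/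
open MeasureTheory Real Set

/-!
With `k = L²`, integrate by parts in `∫ e^{-s} / A (s / k)`. The boundary value at `0` is the
reciprocal of the total mass, since the balls `{‖x‖ < 1 / √t}` exhaust the space as `t → 0⁺`. In
polar coordinates, with `r = 1 / √t` and `n` the dimension, the mass of a ball of radius `r` has
`r`-derivative `n |B₁| r^(n-1) f r`; as `dr/dt = -r³ / 2`, this gives
`A' t = -(n |B₁| / 2) r^(n+2) f r`, the source of the exponent `-(n + 2) / 2`. All this
holds for any continuous nonnegative integrable radial density `f` with `f 0 ≠ 0`; the Gaussian
adds only the values of `∫ f` and `|B₁|`.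
-/

open Filter Topology Module Metric

section IntegrationByParts

lemma setIntegral_exp_neg_mul_eq_of_hasDerivAt_of_nonneg {F G : ℝ → ℝ} {a b l : ℝ} (hab : a < b)
    (hlim : Tendsto F (𝓝[>] a) (𝓝 l)) (hderiv : ∀ s ∈ Ioc a b, HasDerivAt F (G s) s)
    (hG : ∀ s ∈ Ioo a b, 0 ≤ G s) :
    ∫ s in Ioo a b, exp (-s) * F s =
      exp (-a) * l - exp (-b) * F b + ∫ s in Ioo a b, exp (-s) * G s := by
  let P : ℝ → ℝ := Function.update F a l
  have hP_left : P a = l := Function.update_self ..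
  have hP : ∀ s, a < s → P s = F s := fun s hs => Function.update_of_ne hs.ne' _ _
  have hP_cont : ContinuousOn P (Icc a b) := by
    refine continuousOn_update_iff.2 ⟨?_, fun _ => hlim.mono_left ?_⟩ <;> rw [Icc_sdiff_left]
    · exact fun s hs => (hderiv s hs).continuousAt.continuousWithinAt
    · exact nhdsWithin_mono _ Ioc_subset_Ioi_self
  have hP_deriv : ∀ s ∈ Ioo a b, HasDerivAt P (G s) s := fun s hs =>
    (hderiv s (Ioo_subset_Ioc_self hs)).congr_of_eventuallyEq <|
      (eventually_gt_nhds hs.1).mono hP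
  -- `G` may be unbounded near `a`: its sign and the finite limit of `F` make it integrable.
  have hG_int : IntervalIntegrable G volume a b :=
    (intervalIntegrable_iff_integrableOn_Ioc_of_le hab.le).2 <|
      intervalIntegral.integrableOn_deriv_of_nonneg hP_cont hP_deriv hG
  have hexp : ∀ s, HasDerivAt (fun s : ℝ => -exp (-s)) (exp (-s)) s := fun s => by
    simpa using (hasDerivAt_neg s).exp.fun_neg
  have hparts := intervalIntegral.integral_mul_deriv_eq_deriv_mul_of_hasDerivAt
    (by rwa [uIcc_of_le hab.le]) (fun s _ => (hexp s).continuousAt.continuousWithinAt)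
    (by rwa [min_eq_left hab.le, max_eq_right hab.le]) (fun s _ => hexp s) hG_int
    (Continuous.intervalIntegrable (by fun_prop) a b)
  simp only [mul_neg, hP_left, hP b hab, intervalIntegral.integral_of_le hab.le,
    integral_Ioc_eq_integral_Ioo, integral_neg] at hparts
  calc ∫ s in Ioo a b, exp (-s) * F s
      = ∫ s in Ioo a b, P s * exp (-s) :=
        setIntegral_congr_fun measurableSet_Ioo fun s hs => by simp only [hP s hs.1, mul_comm]
    _ = exp (-a) * l - exp (-b) * F b + ∫ s in Ioo a b, exp (-s) * G s := by
        simp only [hparts, mul_comm (exp _)]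
        ring

lemma setIntegral_exp_neg_div_comp_div {A g : ℝ → ℝ} {k T a : ℝ} (hk : 0 < k) (hT : 0 < T)
    (ha : a ≠ 0) (hlim : Tendsto A (𝓝[>] 0) (𝓝 a)) (hA : ∀ z, 0 < z → A z ≠ 0)
    (hderiv : ∀ z, 0 < z → HasDerivAt A (-g z) z) (hg : ∀ z, 0 < z → 0 ≤ g z) :
    ∫ s in Ioo 0 T, exp (-s) / A (s / k) =
      a⁻¹ - exp (-T) / A (T / k) + ∫ z in Ioo 0 (T / k), exp (-(k * z)) * (g z / A z ^ 2) := by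
  have hscale : Tendsto (fun s : ℝ => s / k) (𝓝[>] 0) (𝓝[>] 0) := by
    refine tendsto_nhdsWithin_iff.2 ⟨?_, ?_⟩
    · simpa using ((continuous_id.div_const k).tendsto 0).mono_left nhdsWithin_le_nhds
    · exact eventually_mem_nhdsWithin.mono fun s hs => div_pos hs hk
  have hderiv_inv : ∀ s, 0 < s →
      HasDerivAt (fun s => (A (s / k))⁻¹) (k⁻¹ * (g (s / k) / A (s / k) ^ 2)) s := by
    intro s hs
    have hsk : 0 < s / k := div_pos hs hk
    refine (((hderiv _ hsk).inv (hA _ hsk)).comp s ((hasDerivAt_id s).div_const k)).congr_deriv ?_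
    ring
  have hparts := setIntegral_exp_neg_mul_eq_of_hasDerivAt_of_nonneg hT
    ((hlim.inv₀ ha).comp hscale) (fun s hs => hderiv_inv s hs.1) fun s hs => by
      have := hg _ (div_pos hs.1 hk)
      positivity
  have hsubst : ∫ s in Ioo 0 T, exp (-s) * (k⁻¹ * (g (s / k) / A (s / k) ^ 2)) =
      ∫ z in Ioo 0 (T / k), exp (-(k * z)) * (g z / A z ^ 2) := by
    have := intervalIntegral.inv_mul_integral_comp_div (a := 0) (b := T)
      (f := fun z => exp (-(k * z)) * (g z / A z ^ 2)) k
    simpa only [zero_div, mul_div_cancel₀ _ hk.ne', intervalIntegral.integral_of_le hT.le,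
      intervalIntegral.integral_of_le (div_pos hT hk).le, integral_Ioc_eq_integral_Ioo,
      ← integral_const_mul, mul_left_comm k⁻¹] using this
  rw [hsubst] at hparts
  simpa [div_eq_mul_inv] using hparts

end IntegrationByParts

section InvSqrt

lemma inv_sqrt_pow_eq_rpow {t : ℝ} (ht : 0 ≤ t) (m : ℕ) : (√t)⁻¹ ^ m = t ^ (-((m : ℝ) / 2)) := by
  rw [← rpow_natCast, sqrt_eq_rpow, ← rpow_neg ht, ← rpow_mul ht]
  ring_nf

lemma hasDerivAt_inv_sqrt {t : ℝ} (ht : 0 < t) :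
    HasDerivAt (fun t => (√t)⁻¹) (-((√t)⁻¹ ^ 3 / 2)) t := by
  have hsqrt : √t ≠ 0 := (sqrt_pos.2 ht).ne'
  refine ((hasDerivAt_sqrt ht.ne').fun_inv hsqrt).congr_deriv ?_
  field_simp

lemma tendsto_inv_sqrt_nhdsGT_zero : Tendsto (fun t : ℝ => (√t)⁻¹) (𝓝[>] 0) atTop := by
  refine tendsto_inv_nhdsGT_zero.comp (tendsto_nhdsWithin_iff.2 ⟨?_, ?_⟩)
  · simpa using (continuous_sqrt.tendsto 0).mono_left nhdsWithin_le_nhds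
  · exact eventually_mem_nhdsWithin.mono fun t ht => sqrt_pos.2 ht

end InvSqrt

section RadialDensity

variable {E F : Type*} [NormedAddCommGroup E] [NormedAddCommGroup F] [NormedSpace ℝ F]
  [MeasurableSpace E]

lemma setIntegral_ball_pos_of_continuous {μ : Measure E} [μ.IsOpenPosMeasure] {f : E → ℝ} {r : ℝ}
    (hf : Continuous f) (hf_nonneg : ∀ x, 0 ≤ f x) (hf_zero : f 0 ≠ 0) (hf_int : Integrable f μ)
    (hr : 0 < r) :
    0 < ∫ x in ball 0 r, f x ∂μ := by
  rw [setIntegral_pos_iff_support_of_nonneg_ae (.of_forall hf_nonneg) hf_int.integrableOn]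
  exact (hf.isOpen_support.inter isOpen_ball).measure_pos μ ⟨0, hf_zero, mem_ball_self hr⟩

variable [BorelSpace E]

lemma tendsto_setIntegral_ball_inv_sqrt {μ : Measure E} {f : E → F} (hf : Integrable f μ) :
    Tendsto (fun t : ℝ => ∫ x in ball 0 (√t)⁻¹, f x ∂μ) (𝓝[>] 0) (𝓝 (∫ x, f x ∂μ)) :=
  (aecover_ball tendsto_inv_sqrt_nhdsGT_zero).integral_tendsto_of_countably_generated hf

variable [NormedSpace ℝ E] [FiniteDimensional ℝ E] [Nontrivial E] (μ : Measure E)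
  [μ.IsAddHaarMeasure]

lemma setIntegral_ball_fun_norm_addHaar (f : ℝ → F) {r : ℝ} (hr : 0 ≤ r) :
    ∫ x in ball (0 : E) r, f ‖x‖ ∂μ =
      finrank ℝ E • μ.real (ball 0 1) • ∫ y in 0..r, y ^ (finrank ℝ E - 1) • f y := by
  calc ∫ x in ball (0 : E) r, f ‖x‖ ∂μ
      = ∫ x, (Iio r).indicator f ‖x‖ ∂μ := by
        rw [← integral_indicator measurableSet_ball]
        congr 1 with x
        simp [indicator]
    _ = finrank ℝ E • μ.real (ball 0 1) •
          ∫ y in Ioi 0, (Iio r).indicator (fun y => y ^ (finrank ℝ E - 1) • f y) y := by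
        simp only [integral_fun_norm_addHaar, indicator_smul]
    _ = _ := by
        rw [setIntegral_indicator measurableSet_Iio, Ioi_inter_Iio,
          intervalIntegral.integral_of_le hr, integral_Ioc_eq_integral_Ioo]

lemma hasDerivAt_setIntegral_ball_fun_norm_addHaar [CompleteSpace F] {f : ℝ → F}
    (hf : Continuous f) {r : ℝ} (hr : 0 < r) :
    HasDerivAt (fun r => ∫ x in ball (0 : E) r, f ‖x‖ ∂μ)
      (finrank ℝ E • μ.real (ball 0 1) • r ^ (finrank ℝ E - 1) • f r) r := by
  have hcont : Continuous fun y : ℝ => y ^ (finrank ℝ E - 1) • f y := by fun_prop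
  have hradial := ((hcont.integral_hasStrictDerivAt 0 r).hasDerivAt.const_smul
    (μ.real (ball (0 : E) 1))).const_smul (finrank ℝ E)
  exact hradial.congr_of_eventuallyEq <| (eventually_ge_nhds hr).mono fun _ =>
    setIntegral_ball_fun_norm_addHaar μ f

lemma hasDerivAt_setIntegral_ball_inv_sqrt {f : ℝ → ℝ} (hf : Continuous f) {t : ℝ} (ht : 0 < t) :
    HasDerivAt (fun t => ∫ x in ball (0 : E) (√t)⁻¹, f ‖x‖ ∂μ)
      (-(finrank ℝ E * μ.real (ball (0 : E) 1) / 2 *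
        (f (√t)⁻¹ * t ^ (-(((finrank ℝ E : ℝ) + 2) / 2))))) t := by
  have hr : 0 < (√t)⁻¹ := inv_pos.2 (sqrt_pos.2 ht)
  refine ((hasDerivAt_setIntegral_ball_fun_norm_addHaar μ hf hr).comp t
    (hasDerivAt_inv_sqrt ht)).congr_deriv ?_
  have hpow : t ^ (-(((finrank ℝ E : ℝ) + 2) / 2)) =
      (√t)⁻¹ ^ (finrank ℝ E - 1) * (√t)⁻¹ ^ 3 := by
    have hdim : finrank ℝ E - 1 + 3 = finrank ℝ E + 2 := by
      have := finrank_pos (R := ℝ) (M := E)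
      omega
    rw [← pow_add, hdim, inv_sqrt_pow_eq_rpow ht.le]
    push_cast
    rfl
  rw [hpow]
  simp only [nsmul_eq_mul, smul_eq_mul]
  ring

theorem extinction_integral_identity_general {f : ℝ → ℝ} (hf : Continuous f)
    (hf_nonneg : ∀ r, 0 ≤ f r) (hf_zero : f 0 ≠ 0) (hf_int : Integrable (fun x : E => f ‖x‖) μ)
    {k T : ℝ} (hk : 0 < k) (hT : 0 < T) {A : ℝ → ℝ}
    (hA : ∀ t, 0 < t → A t = ∫ x in ball (0 : E) (√t)⁻¹, f ‖x‖ ∂μ) :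
    ∫ s in Ioo 0 T, exp (-s) / A (s / k) =
      (∫ x : E, f ‖x‖ ∂μ)⁻¹ - exp (-T) / A (T / k) +
        finrank ℝ E * μ.real (ball (0 : E) 1) / 2 *
          ∫ z in Ioo 0 (T / k),
            exp (-(k * z)) * f (√z)⁻¹ / A z ^ 2 * z ^ (-(((finrank ℝ E : ℝ) + 2) / 2)) := by
  have hf_norm : Continuous fun x : E => f ‖x‖ := hf.comp continuous_norm
  have hmass_pos : ∀ r : ℝ, 0 < r → 0 < ∫ x in ball (0 : E) r, f ‖x‖ ∂μ := fun r hr =>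
    setIntegral_ball_pos_of_continuous hf_norm (fun x => hf_nonneg ‖x‖) (by simpa using hf_zero)
      hf_int hr
  have htotal_pos : 0 < ∫ x : E, f ‖x‖ ∂μ :=
    (hmass_pos 1 one_pos).trans_le <|
      setIntegral_le_integral hf_int (.of_forall fun x => hf_nonneg ‖x‖)
  have hlim : Tendsto A (𝓝[>] 0) (𝓝 (∫ x : E, f ‖x‖ ∂μ)) :=
    (tendsto_setIntegral_ball_inv_sqrt hf_int).congr' <|
      eventually_mem_nhdsWithin.mono fun t ht => (hA t ht).symm
  rw [setIntegral_exp_neg_div_comp_div hk hT htotal_pos.ne' hlim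
    (fun z hz => hA z hz ▸ (hmass_pos _ (inv_pos.2 (sqrt_pos.2 hz))).ne')
    (fun z hz => (hasDerivAt_setIntegral_ball_inv_sqrt μ hf hz).congr_of_eventuallyEq <|
      (eventually_gt_nhds hz).mono hA)
    (fun z hz => by
      have := hf_nonneg (√z)⁻¹
      positivity), ← integral_const_mul]
  congr 2 with z
  ring

end RadialDensity

section HeatKernel

/-- The radial profile of the heat kernel of `ℝⁿ` at time `1`: the kernel is
`x ↦ heatKernelProfile n ‖x‖`. -/
noncomputable def heatKernelProfile (n : ℕ) (r : ℝ) : ℝ :=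
  1 / (4 * π) ^ ((n : ℝ) / 2) * exp (-r ^ 2 / 4)

lemma continuous_heatKernelProfile (n : ℕ) : Continuous (heatKernelProfile n) := by
  unfold heatKernelProfile
  fun_prop

lemma heatKernelProfile_pos (n : ℕ) (r : ℝ) : 0 < heatKernelProfile n r := by
  unfold heatKernelProfile
  positivity

variable (E : Type*) [NormedAddCommGroup E] [InnerProductSpace ℝ E] [FiniteDimensional ℝ E]
  [MeasurableSpace E] [BorelSpace E]

lemma integral_heatKernelProfile_norm : ∫ x : E, heatKernelProfile (finrank ℝ E) ‖x‖ = 1 := by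
  have hgauss : ∫ x : E, exp (-‖x‖ ^ 2 / 4) = (4 * π) ^ ((finrank ℝ E : ℝ) / 2) := by
    convert GaussianFourier.integral_rexp_neg_mul_sq_norm (V := E) (b := 1 / 4) (by norm_num)
      using 3 <;> ring_nf
  simp only [heatKernelProfile, integral_const_mul, hgauss]
  exact one_div_mul_cancel (by positivity)

lemma finrank_mul_volume_real_unitBall [Nontrivial E] :
    finrank ℝ E * volume.real (ball (0 : E) 1) =
      2 * π ^ ((finrank ℝ E : ℝ) / 2) / Gamma ((finrank ℝ E : ℝ) / 2) := by
  have hdim : (0 : ℝ) < finrank ℝ E := by exact_mod_cast finrank_pos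
  have hsqrt : √π ^ finrank ℝ E = π ^ ((finrank ℝ E : ℝ) / 2) := by
    rw [sqrt_eq_rpow, ← rpow_mul_natCast pi_nonneg]
    ring_nf
  rw [Measure.real, InnerProductSpace.volume_ball, Gamma_add_one (by positivity), hsqrt,
    ENNReal.ofReal_one, one_pow, one_mul, ENNReal.toReal_ofReal (by positivity)]
  field_simp

lemma finrank_mul_volume_real_unitBall_div_two_mul_heatKernelProfile_inv_sqrt [Nontrivial E]
    {z : ℝ} (hz : 0 ≤ z) :
    finrank ℝ E * volume.real (ball (0 : E) 1) / 2 * heatKernelProfile (finrank ℝ E) (√z)⁻¹ =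
      2 / Gamma ((finrank ℝ E : ℝ) / 2) / 2 ^ (finrank ℝ E + 1) * exp (-(1 / (4 * z))) := by
  have hfour : (4 : ℝ) ^ ((finrank ℝ E : ℝ) / 2) = 2 ^ finrank ℝ E := by
    rw [show (4 : ℝ) = 2 ^ (2 : ℝ) by norm_num, ← rpow_mul two_pos.le, ← rpow_natCast]
    ring_nf
  have hexp : exp (-(√z)⁻¹ ^ 2 / 4) = exp (-(1 / (4 * z))) := by
    rw [inv_pow, sq_sqrt hz]
    ring_nf
  rw [finrank_mul_volume_real_unitBall, heatKernelProfile, mul_rpow four_pos.le pi_nonneg, hfour,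
    hexp]
  have : π ^ ((finrank ℝ E : ℝ) / 2) ≠ 0 := by positivity
  field_simp
  ring

end HeatKernel

/-- Integration by parts plus the change of variable `z = s/L²` in the extinction analysis:
`∫₀^T e^{-s}/A₁(s/L²) ds = 1 - e^{-T}/A₁(T/L²) + (C_N/2^{N+1}) ∫₀^{T/L²} e^{-L²z - 1/(4z)} A₁(z)^{-2} z^{-(N+2)/2} dz`
with `C_N = 2/Γ(N/2)`. -/
theorem extinction_integral_identity
    (N : ℕ) (hN : 1 ≤ N) (L T : ℝ) (hL : 0 < L) (hT : 0 < T)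
    (A : ℝ → ℝ)
    (hA : ∀ t, 0 < t → A t =
      (1 / (4 * Real.pi) ^ ((N : ℝ) / 2)) *
        ∫ x in {x : EuclideanSpace ℝ (Fin N) | ‖x‖ < 1 / Real.sqrt t},
          Real.exp (-‖x‖ ^ 2 / 4)) :
    (∫ s in Set.Ioo (0 : ℝ) T, Real.exp (-s) / A (s / L ^ 2)) =
      1 - Real.exp (-T) / A (T / L ^ 2) +
        ((2 / Real.Gamma ((N : ℝ) / 2)) / 2 ^ (N + 1)) *
          ∫ z in Set.Ioo (0 : ℝ) (T / L ^ 2),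
            Real.exp (-(L ^ 2 * z) - 1 / (4 * z)) / (A z) ^ 2 *
              z ^ (-(((N : ℝ) + 2) / 2)) := by
  have : Nonempty (Fin N) := ⟨⟨0, hN⟩⟩
  have hmass := integral_heatKernelProfile_norm (EuclideanSpace ℝ (Fin N))
  have hconst := fun z => finrank_mul_volume_real_unitBall_div_two_mul_heatKernelProfile_inv_sqrt
    (EuclideanSpace ℝ (Fin N)) (z := z)
  have hgeneral := extinction_integral_identity_general
    (volume : Measure (EuclideanSpace ℝ (Fin N))) (continuous_heatKernelProfile N)
    (fun r => (heatKernelProfile_pos N r).le) (heatKernelProfile_pos N 0).ne'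
  rw [finrank_euclideanSpace_fin] at hmass hconst hgeneral
  rw [hgeneral (.of_integral_ne_zero (by simp [hmass])) (pow_pos hL 2) hT fun t ht => by
      simp only [hA t ht, heatKernelProfile, integral_const_mul, ball_zero_eq, one_div],
    hmass, inv_one, ← integral_const_mul, ← integral_const_mul]
  congr 1
  refine setIntegral_congr_fun measurableSet_Ioo fun z hz => ?_
  rw [sub_eq_add_neg, exp_add]
  linear_combination exp (-(L ^ 2 * z)) / A z ^ 2 * z ^ (-(((N : ℝ) + 2) / 2)) * hconst z hz.1.le
end

section
/- Let $N\ge 1$ be an integer, let $\theta>0$, $\delta>\theta$ and $0<\gamma<1$. For $\varepsilon\in(0,\min(1,\delta-\theta))$ set $T_\varepsilon:=\ln\frac{\delta-\theta}{\varepsilon}$, $L_\varepsilon:=\gamma\sqrt{T_\varepsilon\ln\frac{1}{\varepsilon}}$, and, with $A_1(z):=(4\pi)^{-N/2}\int_{\{x\in\mathbb{R}^N:|x|<1/\sqrt z\}}e^{-|x|^2/4}dx$, define $H_\varepsilon:=\int_0^{1/(\gamma^2\ln\frac{1}{\varepsilon})}\frac{e^{-L_\varepsilon^2 z-\frac{1}{4z}}}{A_1(z)^2}\,z^{-\frac{N+2}{2}}\,dz$.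 Then $\varepsilon=o(H_\varepsilon)$ as $\varepsilon\to0^+$; that is, for every constant $c>0$ there exists $\varepsilon_0>0$ such that $c\,\varepsilon<H_\varepsilon$ for all $\varepsilon\in(0,\varepsilon_0)$. -/
open MeasureTheory Real Set

/-!
Substituting `l = ln (1/ε)` and `T = l + ln (δ - θ)`, the exponent `-L² z - 1/(4z)` with
`L² = γ² T l` is at least `-(T + γ l)/2` for `z` between `1/(2γl)` and `1/(2γ²l)`, the two points at
which `1/(4z) = γ l/2` and `L² z = T/2`. Since `A₁ ≤ 1`, the other factors of the integrand are at
least `1` there, so `H` is at least a constant times `e^{-(1+γ)l/2} / l`. As `γ < 1`, this decays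
strictly slower than `ε = e^{-l}`.
-/

open Filter Topology Module

section GaussianBallMass

variable {V : Type*} [NormedAddCommGroup V] [InnerProductSpace ℝ V] [FiniteDimensional ℝ V]
  [MeasurableSpace V] [BorelSpace V] {b : ℝ}

lemma integrable_exp_neg_mul_sq_norm (hb : 0 < b) :
    Integrable fun x : V ↦ exp (-b * ‖x‖ ^ 2) := by
  apply Integrable.of_integral_ne_zero
  rw [GaussianFourier.integral_rexp_neg_mul_sq_norm hb]
  positivity

variable (V) in
/-- The mass that the centred Gaussian probability measure on `V` with density proportional to
`exp (-b * ‖x‖ ^ 2)` gives to the ball of radius `r` around the origin. For `b = 1 / 4` and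
`r = 1 / √z` it is the paper's `A₁(z)`. -/
noncomputable def gaussianBallMass (b r : ℝ) : ℝ :=
  (1 / (π / b) ^ ((finrank ℝ V : ℝ) / 2)) * ∫ x in Metric.ball (0 : V) r, exp (-b * ‖x‖ ^ 2)

lemma gaussianBallMass_pos (hb : 0 < b) {r : ℝ} (hr : 0 < r) : 0 < gaussianBallMass V b r := by
  have hint : Integrable fun x : V ↦ exp (-b * ‖x‖ ^ 2) := integrable_exp_neg_mul_sq_norm hb
  have : NeZero (volume.restrict (Metric.ball (0 : V) r)) :=
    ⟨Measure.restrict_eq_zero.not.2 (Metric.measure_ball_pos _ _ hr).ne'⟩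
  exact mul_pos (by positivity) (integral_exp_pos hint.integrableOn)

lemma gaussianBallMass_le_one (hb : 0 < b) (r : ℝ) : gaussianBallMass V b r ≤ 1 := by
  rw [gaussianBallMass, one_div, inv_mul_le_one₀ (by positivity),
    ← GaussianFourier.integral_rexp_neg_mul_sq_norm hb]
  exact setIntegral_le_integral (integrable_exp_neg_mul_sq_norm hb)
    (ae_of_all _ fun x ↦ (exp_pos _).le)

lemma gaussianBallMass_mono (hb : 0 < b) : Monotone (gaussianBallMass V b) := by
  intro r r' hrr'
  refine mul_le_mul_of_nonneg_left ?_ (by positivity)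
  exact setIntegral_mono_set (integrable_exp_neg_mul_sq_norm hb).integrableOn
    (ae_of_all _ fun x ↦ (exp_pos _).le) (Metric.ball_subset_ball hrr').eventuallyLE

lemma mapsTo_gaussianBallMass_one_div_sqrt (hb : 0 < b) :
    MapsTo (fun z ↦ gaussianBallMass V b (1 / √z)) (Ioi 0) (Ioc 0 1) := fun _ hz ↦
  ⟨gaussianBallMass_pos hb (one_div_pos.2 (sqrt_pos.2 hz)), gaussianBallMass_le_one hb _⟩

lemma antitoneOn_gaussianBallMass_one_div_sqrt (hb : 0 < b) :
    AntitoneOn (fun z ↦ gaussianBallMass V b (1 / √z)) (Ioi 0) := fun _ hy _ _ hyz ↦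
  gaussianBallMass_mono hb (one_div_le_one_div_of_le (sqrt_pos.2 hy) (sqrt_le_sqrt hyz))

lemma gaussianBallMass_euclideanSpace_one_div_four (N : ℕ) (r : ℝ) :
    gaussianBallMass (EuclideanSpace ℝ (Fin N)) (1 / 4) r =
      (1 / (4 * π) ^ ((N : ℝ) / 2)) *
        ∫ x in {x : EuclideanSpace ℝ (Fin N) | ‖x‖ < r}, exp (-‖x‖ ^ 2 / 4) := by
  have hπ : π / (1 / 4) = 4 * π := by ring
  have hexp : ∀ x : EuclideanSpace ℝ (Fin N), -(1 / 4) * ‖x‖ ^ 2 = -‖x‖ ^ 2 / 4 :=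
    fun x ↦ by ring
  simp only [gaussianBallMass, finrank_euclideanSpace_fin, hπ, hexp, ball_zero_eq]

end GaussianBallMass

section Integrability

lemma integrableOn_Ioo_of_continuousOn_of_tendsto {E : Type*} [NormedAddCommGroup E]
    {f : ℝ → E} {a b : ℝ} {ea eb : E} (hf : ContinuousOn f (Ioo a b))
    (ha : Tendsto f (𝓝[>] a) (𝓝 ea)) (hb : Tendsto f (𝓝[<] b) (𝓝 eb)) :
    IntegrableOn f (Ioo a b) := by
  have hext : IntegrableOn (extendFrom (Ioo a b) f) (Ioo a b) :=
    (continuousOn_Icc_extendFrom_Ioo hf ha hb).integrableOn_Icc.mono_set Ioo_subset_Icc_self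
  exact hext.congr_fun (extendFrom_extends hf) measurableSet_Ioo

variable {b : ℝ}

lemma tendsto_exp_neg_div_mul_rpow_neg_nhdsGT_zero (hb : 0 < b) (s : ℝ) :
    Tendsto (fun z ↦ exp (-b / z) * z ^ (-s)) (𝓝[>] 0) (𝓝 0) := by
  refine ((tendsto_rpow_mul_exp_neg_mul_atTop_nhds_zero s b hb).comp
    tendsto_inv_nhdsGT_zero).congr' ?_
  filter_upwards [self_mem_nhdsWithin] with z hz
  simp only [Function.comp_apply, inv_rpow (mem_Ioi.1 hz).le, rpow_neg (mem_Ioi.1 hz).le,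
    div_eq_mul_inv, mul_comm]

lemma integrableOn_exp_neg_div_mul_rpow_neg (hb : 0 < b) (s a : ℝ) :
    IntegrableOn (fun z ↦ exp (-b / z) * z ^ (-s)) (Ioo 0 a) := by
  rcases le_or_gt a 0 with ha | ha
  · simp [Ioo_eq_empty_of_le ha]
  have hcont : ContinuousOn (fun z ↦ exp (-b / z) * z ^ (-s)) (Ioi 0) := fun z hz ↦ by
    have hz' : z ≠ 0 := (mem_Ioi.1 hz).ne'
    exact ContinuousAt.continuousWithinAt (by fun_prop (disch := simp [hz']))
  exact integrableOn_Ioo_of_continuousOn_of_tendsto (hcont.mono Ioo_subset_Ioi_self)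
    (tendsto_exp_neg_div_mul_rpow_neg_nhdsGT_zero hb s)
    ((hcont.continuousAt (Ioi_mem_nhds ha)).tendsto.mono_left nhdsWithin_le_nhds)

end Integrability

/-- The integrand of the paper's `H_ε`, with a general weight `A` in place of `A₁`, a general
exponent `s` in place of `(N + 2) / 2`, and `Q` in place of `L_ε²`. -/
noncomputable def extinctionIntegrand (A : ℝ → ℝ) (s Q z : ℝ) : ℝ :=
  exp (-Q * z - 1 / (4 * z)) / A z ^ 2 * z ^ (-s)

section ExtinctionIntegrand

variable {A : ℝ → ℝ} {s Q : ℝ}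

lemma extinctionIntegrand_nonneg {z : ℝ} (hz : 0 ≤ z) : 0 ≤ extinctionIntegrand A s Q z := by
  unfold extinctionIntegrand
  positivity

lemma integrableOn_extinctionIntegrand (hA : MapsTo A (Ioi 0) (Ioi 0))
    (hanti : AntitoneOn A (Ioi 0)) (hQ : 0 ≤ Q) {a : ℝ} (ha : 0 < a) :
    IntegrableOn (extinctionIntegrand A s Q) (Ioo 0 a) := by
  have hmeas : AEStronglyMeasurable (fun z ↦ exp (-Q * z) / A z ^ 2)
      (volume.restrict (Ioo 0 a)) := by
    have hAmeas : AEMeasurable A (volume.restrict (Ioo 0 a)) :=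
      aemeasurable_restrict_of_antitoneOn measurableSet_Ioo (hanti.mono Ioo_subset_Ioi_self)
    exact AEMeasurable.aestronglyMeasurable (by fun_prop)
  have hbound : ∀ᵐ z ∂volume.restrict (Ioo 0 a), ‖exp (-Q * z) / A z ^ 2‖ ≤ 1 / A a ^ 2 := by
    filter_upwards [ae_restrict_mem measurableSet_Ioo] with z hz
    have hAa : 0 < A a := hA ha
    have hAaz : A a ≤ A z := hanti hz.1 ha hz.2.le
    have hexp : exp (-Q * z) ≤ 1 := exp_le_one_iff.2 (by nlinarith [hz.1])
    rw [norm_of_nonneg (by positivity)]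
    gcongr
  refine ((integrableOn_exp_neg_div_mul_rpow_neg (b := 1 / 4) (by norm_num) s a).bdd_mul
    hmeas hbound).congr (ae_of_all _ fun z ↦ ?_)
  have hsplit : exp (-Q * z - 1 / (4 * z)) = exp (-Q * z) * exp (-(1 / 4) / z) := by
    rw [← exp_add]
    ring_nf
  simp only [extinctionIntegrand, hsplit]
  ring

lemma exp_le_extinctionIntegrand (hA : MapsTo A (Ioi 0) (Ioc 0 1)) (hs : 0 ≤ s) (hQ : 0 ≤ Q)
    {u v z : ℝ} (hu : 0 < u) (hv : v ≤ 1) (hz : z ∈ Icc u v) :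
    exp (-Q * v - 1 / (4 * u)) ≤ extinctionIntegrand A s Q z := by
  have hz0 : 0 < z := hu.trans_le hz.1
  obtain ⟨hA0, hA1⟩ := hA hz0
  have hexponent : -Q * v - 1 / (4 * u) ≤ -Q * z - 1 / (4 * z) :=
    sub_le_sub (mul_le_mul_of_nonpos_left hz.2 (neg_nonpos.2 hQ))
      (one_div_le_one_div_of_le (by positivity) (by linarith [hz.1]))
  calc exp (-Q * v - 1 / (4 * u)) ≤ exp (-Q * z - 1 / (4 * z)) := exp_le_exp.2 hexponent
    _ ≤ exp (-Q * z - 1 / (4 * z)) / A z ^ 2 :=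
      le_div_self (exp_pos _).le (by positivity) (pow_le_one₀ hA0.le hA1)
    _ ≤ extinctionIntegrand A s Q z :=
      le_mul_of_one_le_right (by positivity)
        (one_le_rpow_of_pos_of_le_one_of_nonpos hz0 (hz.2.trans hv) (neg_nonpos.2 hs))

lemma sub_mul_exp_le_setIntegral_extinctionIntegrand (hA : MapsTo A (Ioi 0) (Ioc 0 1))
    (hanti : AntitoneOn A (Ioi 0)) (hs : 0 ≤ s) (hQ : 0 ≤ Q)
    {u v a : ℝ} (hu : 0 < u) (huv : u ≤ v) (hv : v ≤ 1) (hva : v ≤ a) :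
    (v - u) * exp (-Q * v - 1 / (4 * u)) ≤ ∫ z in Ioo 0 a, extinctionIntegrand A s Q z := by
  have hint : IntegrableOn (extinctionIntegrand A s Q) (Ioo 0 a) :=
    integrableOn_extinctionIntegrand (hA.mono_right Ioc_subset_Ioi_self) hanti hQ
      (hu.trans_le (huv.trans hva))
  have hsub : Ioo u v ⊆ Ioo 0 a := Ioo_subset_Ioo hu.le hva
  calc (v - u) * exp (-Q * v - 1 / (4 * u))
      = exp (-Q * v - 1 / (4 * u)) * volume.real (Ioo u v) := by
        rw [volume_real_Ioo_of_le huv, mul_comm]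
    _ ≤ ∫ z in Ioo u v, extinctionIntegrand A s Q z :=
      setIntegral_ge_of_const_le_real measurableSet_Ioo measure_Ioo_lt_top.ne
        (fun _ hz ↦ exp_le_extinctionIntegrand hA hs hQ hu hv (Ioo_subset_Icc_self hz))
        (hint.mono_set hsub)
    _ ≤ ∫ z in Ioo 0 a, extinctionIntegrand A s Q z :=
      setIntegral_mono_set hint
        ((ae_restrict_mem measurableSet_Ioo).mono fun _ hz ↦ extinctionIntegrand_nonneg hz.1.le)
        hsub.eventuallyLE

lemma mul_exp_le_setIntegral_extinctionIntegrand_sq (hA : MapsTo A (Ioi 0) (Ioc 0 1))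
    (hanti : AntitoneOn A (Ioi 0)) (hs : 0 ≤ s) {γ T l : ℝ} (hγ0 : 0 < γ) (hγ1 : γ ≤ 1)
    (hT : 0 ≤ T) (hl : 1 ≤ 2 * γ ^ 2 * l) :
    (1 - γ) / (2 * γ ^ 2 * l) * exp (-(T + γ * l) / 2) ≤
      ∫ z in Ioo 0 (1 / (γ ^ 2 * l)), extinctionIntegrand A s ((γ * √(T * l)) ^ 2) z := by
  have hl0 : 0 < l := pos_of_mul_pos_right (one_pos.trans_le hl) (by positivity)
  have hsq : (γ * √(T * l)) ^ 2 = γ ^ 2 * (T * l) := by rw [mul_pow, sq_sqrt (by positivity)]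
  have huv : 1 / (2 * γ * l) ≤ 1 / (2 * γ ^ 2 * l) := by
    have : γ ^ 2 ≤ γ := pow_le_of_le_one hγ0.le hγ1 two_ne_zero
    gcongr
  have hva : 1 / (2 * γ ^ 2 * l) ≤ 1 / (γ ^ 2 * l) := by
    have : γ ^ 2 ≤ 2 * γ ^ 2 := by linarith [sq_nonneg γ]
    gcongr
  have hlength : 1 / (2 * γ ^ 2 * l) - 1 / (2 * γ * l) = (1 - γ) / (2 * γ ^ 2 * l) := by
    field_simp
  have hexponent : -(γ * √(T * l)) ^ 2 * (1 / (2 * γ ^ 2 * l)) - 1 / (4 * (1 / (2 * γ * l))) =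
      -(T + γ * l) / 2 := by
    rw [hsq]
    field_simp
    ring
  rw [← hlength, ← hexponent]
  exact sub_mul_exp_le_setIntegral_extinctionIntegrand hA hanti hs (sq_nonneg _)
    (by positivity) huv (div_le_one_of_le₀ hl (by positivity)) hva

end ExtinctionIntegrand

lemma eventually_mul_exp_neg_lt {β κ : ℝ} (hβ : β < 1) (hκ : 0 < κ) (c : ℝ) :
    ∀ᶠ l in atTop, c * exp (-l) < κ * (exp (-(β * l)) / l) := by
  have hlim : Tendsto (fun l ↦ κ * (exp ((1 - β) * l) / l)) atTop atTop := by
    simpa only [rpow_one] using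
      (tendsto_exp_mul_div_rpow_atTop 1 (1 - β) (sub_pos.2 hβ)).const_mul_atTop hκ
  filter_upwards [hlim.eventually_gt_atTop c] with l hcl
  have hexp : exp (-(β * l)) = exp ((1 - β) * l) * exp (-l) := by
    rw [← exp_add]
    ring_nf
  calc c * exp (-l) < κ * (exp ((1 - β) * l) / l) * exp (-l) := by gcongr
    _ = κ * (exp (-(β * l)) / l) := by rw [hexp]; ring

lemma tendsto_log_one_div_nhdsGT_zero : Tendsto (fun ε : ℝ ↦ log (1 / ε)) (𝓝[>] 0) atTop := by
  simpa only [one_div] using! tendsto_log_atTop.comp tendsto_inv_nhdsGT_zero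

theorem extinction_Heps_estimate_general {A : ℝ → ℝ} (hA : MapsTo A (Ioi 0) (Ioc 0 1))
    (hanti : AntitoneOn A (Ioi 0)) {s D γ : ℝ} (hs : 0 ≤ s) (hD : 0 < D) (hγ0 : 0 < γ)
    (hγ1 : γ < 1) (c : ℝ) :
    ∀ᶠ ε in 𝓝[>] 0, c * ε < ∫ z in Ioo 0 (1 / (γ ^ 2 * log (1 / ε))),
      extinctionIntegrand A s ((γ * √(log (D / ε) * log (1 / ε))) ^ 2) z := by
  set κ := (1 - γ) / (2 * γ ^ 2) * exp (-log D / 2) with hκ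
  have hκ0 : 0 < κ := mul_pos (div_pos (sub_pos.2 hγ1) (by positivity)) (exp_pos _)
  have hβ : (1 + γ) / 2 < 1 := by linarith
  have hlog := tendsto_log_one_div_nhdsGT_zero
  filter_upwards [self_mem_nhdsWithin, hlog.eventually (eventually_mul_exp_neg_lt hβ hκ0 c),
    hlog.eventually_ge_atTop (-log D), hlog.eventually_ge_atTop (1 / (2 * γ ^ 2))]
    with ε hε hdecay hT hl
  rw [mem_Ioi] at hε
  have hexp : exp (-log (1 / ε)) = ε := by rw [one_div, log_inv, neg_neg, exp_log hε]
  have hlogD : log (D / ε) = log D + log (1 / ε) := by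
    rw [← log_mul hD.ne' (by positivity), mul_one_div]
  rw [hexp] at hdecay
  rw [hlogD]
  set l := log (1 / ε)
  calc c * ε < κ * (exp (-((1 + γ) / 2 * l)) / l) := hdecay
    _ = (1 - γ) / (2 * γ ^ 2 * l) * (exp (-log D / 2) * exp (-((1 + γ) / 2 * l))) := by
      rw [hκ, ← div_div]
      ring
    _ = (1 - γ) / (2 * γ ^ 2 * l) * exp (-(log D + l + γ * l) / 2) := by
      rw [← exp_add]
      ring_nf
    _ ≤ _ := mul_exp_le_setIntegral_extinctionIntegrand_sq hA hanti hs hγ0 hγ1.le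
      (by linarith) ((div_le_iff₀' (by positivity)).1 hl)

/-- The key lower estimate in the extinction proof: with
`T_ε = ln((δ-θ)/ε)`, `L_ε = γ √(T_ε ln(1/ε))` and
`H_ε = ∫₀^{1/(γ² ln(1/ε))} e^{-L_ε² z - 1/(4z)} A₁(z)^{-2} z^{-(N+2)/2} dz`,
one has `ε = o(H_ε)` as `ε → 0⁺`. -/
theorem extinction_Heps_estimate
    (N : ℕ) (hN : 1 ≤ N) (θ δ γ : ℝ) (hθ : 0 < θ) (hδ : θ < δ)
    (hγ0 : 0 < γ) (hγ1 : γ < 1)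
    (A : ℝ → ℝ)
    (hA : ∀ z, 0 < z → A z =
      (1 / (4 * Real.pi) ^ ((N : ℝ) / 2)) *
        ∫ x in {x : EuclideanSpace ℝ (Fin N) | ‖x‖ < 1 / Real.sqrt z},
          Real.exp (-‖x‖ ^ 2 / 4))
    (H : ℝ → ℝ)
    (hH : ∀ ε, 0 < ε → ε < min 1 (δ - θ) →
      H ε = ∫ z in Set.Ioo (0 : ℝ) (1 / (γ ^ 2 * Real.log (1 / ε))),
        Real.exp (-(γ * Real.sqrt (Real.log ((δ - θ) / ε) * Real.log (1 / ε))) ^ 2 * z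
            - 1 / (4 * z)) / (A z) ^ 2 * z ^ (-(((N : ℝ) + 2) / 2))) :
    ∀ c : ℝ, 0 < c → ∃ ε₀ > (0 : ℝ), ∀ ε, 0 < ε → ε < ε₀ → ε < min 1 (δ - θ) →
      c * ε < H ε := by
  intro c _
  have hb : (0 : ℝ) < 1 / 4 := by norm_num
  have hmass : EqOn (fun z ↦ gaussianBallMass (EuclideanSpace ℝ (Fin N)) (1 / 4) (1 / √z)) A
      (Ioi 0) := fun z hz ↦ by
    rw [hA z hz, ← gaussianBallMass_euclideanSpace_one_div_four]
  obtain ⟨ε₀, hε₀, hlt⟩ := mem_nhdsGT_iff_exists_Ioo_subset.1 <|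
    extinction_Heps_estimate_general (s := ((N : ℝ) + 2) / 2)
      ((mapsTo_gaussianBallMass_one_div_sqrt hb).congr hmass)
      ((antitoneOn_gaussianBallMass_one_div_sqrt hb).congr hmass)
      (by positivity) (sub_pos.2 hδ) hγ0 hγ1 c
  exact ⟨ε₀, hε₀, fun ε hε hεε₀ hεm ↦ (hH ε hε hεm).symm ▸ hlt ⟨hε, hεε₀⟩⟩
end

section
/- Let $N\ge 1$ be an integer, $\theta\in(0,1)$, $\theta<\alpha'<\alpha<1$, $\gamma>2$ and $0<k<1-\frac{2}{\gamma}$. For $\varepsilon\in(0,\min(1,\alpha-\theta))$ set $T_\varepsilon:=\ln\frac{\alpha-\theta}{\varepsilon}$ and $L_\varepsilon:=\gamma\sqrt{T_\varepsilon\ln\frac{1}{\varepsilon}}$. Then there exists $\varepsilon_0>0$ such that for all $\varepsilon\in(0,\varepsilon_0)$, all $L\ge L_\varepsilon$, and all $x\in\mathbb{R}^N$ with $|x|\le kL_\varepsilon$, one has $\theta+e^{T_\varepsilon}\left(\frac{\theta+\varepsilon}{(4\pi T_\varepsilon)^{N/2}}\int_{\{y\in\mathbb{R}^N:|y|<L\}}e^{-\frac{|x-y|^2}{4T_\varepsilon}}\,dy-\theta\right)\ge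 \alpha'$. -/
open MeasureTheory Real Set

/-!
If the initial datum is constant on the ball `B(x, R)`, its convolution with the heat kernel at `x`
loses at most the mass of the kernel outside that ball. Comparing the kernel at time `t` with the
one at the later time `t / (1 - s)` bounds this mass by a constant times `e^{-s R² / 4t}`, for any
`0 ≤ s < 1`. When `|x| ≤ k L_ε`, the ball `B(x, R)` with `R = κ √(T_ε ln(1/ε))` and `κ = (1 - k) γ`
lies in `B_L`, and for `t = T_ε` the exponential is `ε^{s κ² / 4}`. As `κ > 2`, some `s < 1` makes
this power larger than `1`, so the loss times `e^{T_ε} = (α - θ) / ε` still tends to `0`, and the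
solution of the toy model is at least `α` up to an error that tends to `0` with `ε`.
-/

section HeatKernel

variable {E : Type*} [NormedAddCommGroup E] [InnerProductSpace ℝ E]

/-- The heat kernel `Γ(t, z)` of a Euclidean space, that is, the fundamental solution of
`u_t = Δu`. It has this meaning for `t > 0` only. -/
noncomputable def heatKernel (t : ℝ) (z : E) : ℝ :=
  exp (-‖z‖ ^ 2 / (4 * t)) / (4 * π * t) ^ ((Module.finrank ℝ E : ℝ) / 2)

lemma heatKernel_nonneg {t : ℝ} (ht : 0 < t) (z : E) : 0 ≤ heatKernel t z := by
  unfold heatKernel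
  positivity

lemma heatKernel_eq_exp_mul_heatKernel_div {t s : ℝ} (ht : 0 < t) (hs : s < 1) (z : E) :
    heatKernel t z = (1 - s) ^ (-((Module.finrank ℝ E : ℝ) / 2)) *
      exp (-s * (‖z‖ ^ 2 / (4 * t))) * heatKernel (t / (1 - s)) z := by
  have hs' : 0 < 1 - s := sub_pos.2 hs
  have hexp : exp (-‖z‖ ^ 2 / (4 * t)) =
      exp (-s * (‖z‖ ^ 2 / (4 * t))) * exp (-‖z‖ ^ 2 / (4 * (t / (1 - s)))) := by
    rw [← exp_add]
    congr 1
    field_simp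
    ring
  have hpow : (4 * π * (t / (1 - s))) ^ ((Module.finrank ℝ E : ℝ) / 2) =
      (4 * π * t) ^ ((Module.finrank ℝ E : ℝ) / 2) *
        (1 - s) ^ (-((Module.finrank ℝ E : ℝ) / 2)) := by
    rw [rpow_neg hs'.le, ← inv_rpow hs'.le, ← mul_rpow (by positivity) (by positivity)]
    ring_nf
  simp only [heatKernel]
  rw [hexp, hpow]
  field_simp

lemma heatKernel_le_exp_mul_heatKernel_div {t s R : ℝ} (ht : 0 < t) (hs₀ : 0 ≤ s) (hs₁ : s < 1)
    (hR : 0 ≤ R) {z : E} (hz : R ≤ ‖z‖) :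
    heatKernel t z ≤ (1 - s) ^ (-((Module.finrank ℝ E : ℝ) / 2)) *
      exp (-s * (R ^ 2 / (4 * t))) * heatKernel (t / (1 - s)) z := by
  have hs : 0 < 1 - s := sub_pos.2 hs₁
  have hΓ := heatKernel_nonneg (div_pos ht hs) z
  rw [heatKernel_eq_exp_mul_heatKernel_div ht hs₁, neg_mul, neg_mul]
  gcongr

variable [FiniteDimensional ℝ E] [MeasurableSpace E] [BorelSpace E]

lemma integral_heatKernel_sub {t : ℝ} (ht : 0 < t) (x : E) :
    ∫ y, heatKernel t (x - y) = 1 := by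
  have hgauss : ∫ z : E, exp (-‖z‖ ^ 2 / (4 * t)) =
      (4 * π * t) ^ ((Module.finrank ℝ E : ℝ) / 2) := by
    convert GaussianFourier.integral_rexp_neg_mul_sq_norm (V := E) (b := 1 / (4 * t))
      (by positivity) using 3
    · ring_nf
    · field_simp
  rw [integral_sub_left_eq_self (heatKernel t) volume x]
  simp only [heatKernel]
  rw [integral_div, hgauss, div_self (by positivity)]

lemma integrable_heatKernel_sub {t : ℝ} (ht : 0 < t) (x : E) :
    Integrable fun y ↦ heatKernel t (x - y) :=
  integrable_of_integral_eq_one (integral_heatKernel_sub ht x)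

lemma one_sub_setIntegral_heatKernel {t : ℝ} (ht : 0 < t) (x : E) {A : Set E}
    (hA : MeasurableSet A) :
    1 - ∫ y in A, heatKernel t (x - y) = ∫ y in Aᶜ, heatKernel t (x - y) := by
  rw [setIntegral_compl hA (integrable_heatKernel_sub ht x), integral_heatKernel_sub ht x]

lemma setIntegral_compl_heatKernel_le {t s R : ℝ} (ht : 0 < t) (hs₀ : 0 ≤ s) (hs₁ : s < 1)
    (hR : 0 ≤ R) {x : E} {A : Set E} (hA : MeasurableSet A) (hball : Metric.ball x R ⊆ A) :
    ∫ y in Aᶜ, heatKernel t (x - y) ≤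
      (1 - s) ^ (-((Module.finrank ℝ E : ℝ) / 2)) * exp (-s * (R ^ 2 / (4 * t))) := by
  have hs : 0 < 1 - s := sub_pos.2 hs₁
  have ht' : 0 < t / (1 - s) := div_pos ht hs
  set c := (1 - s) ^ (-((Module.finrank ℝ E : ℝ) / 2)) * exp (-s * (R ^ 2 / (4 * t)))
  have hc : 0 ≤ c := by positivity
  have hfar : ∀ y ∈ Aᶜ, R ≤ ‖x - y‖ := fun y hy ↦ by
    rw [← dist_eq_norm, dist_comm]
    exact not_lt.1 fun hlt ↦ hy (hball hlt)
  have hint := (integrable_heatKernel_sub ht' x).const_mul c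
  calc ∫ y in Aᶜ, heatKernel t (x - y)
      ≤ ∫ y in Aᶜ, c * heatKernel (t / (1 - s)) (x - y) :=
        setIntegral_mono_on (integrable_heatKernel_sub ht x).integrableOn hint.integrableOn
          hA.compl fun y hy ↦ heatKernel_le_exp_mul_heatKernel_div ht hs₀ hs₁ hR (hfar y hy)
    _ ≤ ∫ y, c * heatKernel (t / (1 - s)) (x - y) :=
        setIntegral_le_integral hint
          (.of_forall fun y ↦ mul_nonneg hc (heatKernel_nonneg ht' (x - y)))
    _ = c := by rw [integral_const_mul, integral_heatKernel_sub ht' x, mul_one]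

end HeatKernel

section ToySolution

variable {E : Type*} [NormedAddCommGroup E] [InnerProductSpace ℝ E]
  [MeasurableSpace E] [BorelSpace E] [FiniteDimensional ℝ E]

/-- The solution `w(t, x) = θ + e^t (v(t, x) - θ)` of the toy model `w_t = Δw + w - θ` with initial
datum `c 𝟙_A`, where `v` solves the heat equation with the same datum. -/
noncomputable def toySolution (θ c : ℝ) (A : Set E) (t : ℝ) (x : E) : ℝ :=
  θ + exp t * (c * (∫ y in A, heatKernel t (x - y)) - θ)

lemma toySolution_eq_integral_exp (θ c : ℝ) (A : Set E) (t : ℝ) (x : E) :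
    toySolution θ c A t x = θ + exp t * (c / (4 * π * t) ^ ((Module.finrank ℝ E : ℝ) / 2) *
      (∫ y in A, exp (-‖x - y‖ ^ 2 / (4 * t))) - θ) := by
  simp only [toySolution, heatKernel, integral_div]
  ring

lemma toySolution_of_exp_eq_div {θ α ε t : ℝ} (hε : ε ≠ 0) (ht : exp t = (α - θ) / ε)
    (A : Set E) (x : E) :
    toySolution θ (θ + ε) A t x =
      α - (α - θ) / ε * ((θ + ε) * (1 - ∫ y in A, heatKernel t (x - y))) := by
  rw [toySolution, ht]
  field_simp
  ring

lemma exp_neg_mul_sq_mul_sqrt_div {ε t : ℝ} (hε : 0 < ε) (hε₁ : ε ≤ 1) (ht : 0 < t) (κ s : ℝ) :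
    exp (-s * ((κ * √(t * log (1 / ε))) ^ 2 / (4 * t))) = ε ^ (s * κ ^ 2 / 4) := by
  have hlog : 0 ≤ log (1 / ε) := log_nonneg ((one_le_div hε).2 hε₁)
  rw [mul_pow, sq_sqrt (by positivity), rpow_def_of_pos hε, one_div, log_inv]
  congr 1
  field_simp

lemma le_toySolution_of_ball_subset {θ α ε κ s : ℝ} (hε : 0 < ε) (hε₁ : ε ≤ 1) (hεα : ε < α - θ)
    (hκ : 0 ≤ κ) (hs₀ : 0 ≤ s) (hs₁ : s < 1) {A : Set E} (hA : MeasurableSet A) {x : E}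
    (hball : Metric.ball x (κ * √(log ((α - θ) / ε) * log (1 / ε))) ⊆ A) :
    α - (α - θ) * |θ + ε| * (1 - s) ^ (-((Module.finrank ℝ E : ℝ) / 2)) *
        ε ^ (s * κ ^ 2 / 4 - 1) ≤
      toySolution θ (θ + ε) A (log ((α - θ) / ε)) x := by
  have hαθ : 0 < α - θ := hε.trans hεα
  have ht : 0 < log ((α - θ) / ε) := log_pos ((one_lt_div hε).2 hεα)
  set C := (1 - s) ^ (-((Module.finrank ℝ E : ℝ) / 2))
  set loss := ∫ y in Aᶜ, heatKernel (log ((α - θ) / ε)) (x - y)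
  have hloss₀ : 0 ≤ loss := integral_nonneg fun y ↦ heatKernel_nonneg ht (x - y)
  have hloss : loss ≤ C * ε ^ (s * κ ^ 2 / 4) := by
    rw [← exp_neg_mul_sq_mul_sqrt_div hε hε₁ ht]
    exact setIntegral_compl_heatKernel_le ht hs₀ hs₁ (by positivity) hA hball
  rw [toySolution_of_exp_eq_div hε.ne' (exp_log (div_pos hαθ hε)),
    one_sub_setIntegral_heatKernel ht x hA]
  refine sub_le_sub_left ?_ α
  calc (α - θ) / ε * ((θ + ε) * loss)
      ≤ (α - θ) / ε * (|θ + ε| * (C * ε ^ (s * κ ^ 2 / 4))) := by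
        gcongr
        exact le_abs_self _
    _ = (α - θ) * |θ + ε| * C * ε ^ (s * κ ^ 2 / 4 - 1) := by
        rw [rpow_sub_one hε.ne']
        ring

end ToySolution

section NonExtinction

open Filter Topology

lemma tendsto_sub_mul_rpow_nhdsGT_zero {p : ℝ} (hp : 0 < p) (α θ C : ℝ) :
    Tendsto (fun ε : ℝ ↦ α - (α - θ) * |θ + ε| * C * ε ^ p) (𝓝[>] 0) (𝓝 α) := by
  have hcont : Continuous fun ε : ℝ ↦ α - (α - θ) * |θ + ε| * C * ε ^ p := by
    have := continuous_rpow_const hp.le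
    fun_prop
  refine (hcont.tendsto' 0 α ?_).mono_left nhdsWithin_le_nhds
  simp [zero_rpow hp.ne']

lemma exists_lt_one_one_lt_mul_sq_div_four {κ : ℝ} (hκ : 2 < κ) :
    ∃ s : ℝ, 0 ≤ s ∧ s < 1 ∧ 1 < s * κ ^ 2 / 4 := by
  have hκsq : 4 < κ ^ 2 := by nlinarith
  obtain ⟨s, hs, hs₁⟩ := exists_between ((div_lt_one (by positivity)).2 hκsq)
  have hsκ : 4 < s * κ ^ 2 := (div_lt_iff₀ (by positivity)).1 hs
  exact ⟨s, (by positivity : 0 ≤ 4 / κ ^ 2).trans hs.le, hs₁, by linarith⟩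

theorem toy_non_extinction_general {E : Type*} [NormedAddCommGroup E] [InnerProductSpace ℝ E]
    [FiniteDimensional ℝ E] [MeasurableSpace E] [BorelSpace E] {θ α' α κ : ℝ}
    (hθα : θ < α) (hα'α : α' < α) (hκ : 2 < κ) :
    ∃ ε₀ > (0 : ℝ), ∀ ε, 0 < ε → ε < ε₀ → ∀ A : Set E, MeasurableSet A →
      ∀ x, Metric.ball x (κ * √(log ((α - θ) / ε) * log (1 / ε))) ⊆ A →
        α' ≤ toySolution θ (θ + ε) A (log ((α - θ) / ε)) x := by
  obtain ⟨s, hs₀, hs₁, hs⟩ := exists_lt_one_one_lt_mul_sq_div_four hκ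
  have hlim := tendsto_sub_mul_rpow_nhdsGT_zero (sub_pos.2 hs) α θ
    ((1 - s) ^ (-((Module.finrank ℝ E : ℝ) / 2)))
  have hsmall : Ioo 0 (min 1 (α - θ)) ∈ 𝓝[>] (0 : ℝ) :=
    Ioo_mem_nhdsGT (lt_min one_pos (sub_pos.2 hθα))
  obtain ⟨ε₀, hε₀, hsub⟩ := mem_nhdsGT_iff_exists_Ioo_subset.1
    (inter_mem hsmall (hlim.eventually_const_le hα'α))
  refine ⟨ε₀, hε₀, fun ε hε hεε₀ A hA x hball ↦ ?_⟩
  obtain ⟨⟨-, hεmin⟩, hbound⟩ := hsub ⟨hε, hεε₀⟩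
  obtain ⟨hε₁, hεα⟩ := lt_min_iff.1 hεmin
  exact hbound.trans
    (le_toySolution_of_ball_subset hε hε₁.le hεα (by linarith) hs₀ hs₁ hA hball)

end NonExtinction

/-- Non-extinction in the toy model `w_t = Δw + w - θ` (Proposition 3.1): with
`T_ε = ln((α-θ)/ε)` and `L_ε = γ √(T_ε ln(1/ε))` for `γ > 2` and `0 < k < 1 - 2/γ`,
for all small enough `ε`, all `L ≥ L_ε` and all `|x| ≤ k L_ε`, the explicit solution
`θ + e^{T_ε}((θ+ε)(4πT_ε)^{-N/2} ∫_{|y|<L} e^{-|x-y|²/(4T_ε)} dy - θ)` is `≥ α'`. -/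
theorem toy_non_extinction
    (N : ℕ) (hN : 1 ≤ N) (θ α' α γ k : ℝ)
    (hθ0 : 0 < θ) (hθ1 : θ < 1) (hθα' : θ < α') (hα'α : α' < α) (hα : α < 1)
    (hγ : 2 < γ) (hk0 : 0 < k) (hk : k < 1 - 2 / γ) :
    ∃ ε₀ > (0 : ℝ), ∀ ε, 0 < ε → ε < ε₀ → ε < min 1 (α - θ) →
      ∀ L, γ * Real.sqrt (Real.log ((α - θ) / ε) * Real.log (1 / ε)) ≤ L →
      ∀ x : EuclideanSpace ℝ (Fin N),
        ‖x‖ ≤ k * (γ * Real.sqrt (Real.log ((α - θ) / ε) * Real.log (1 / ε))) →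
        α' ≤ θ + Real.exp (Real.log ((α - θ) / ε)) *
          ((θ + ε) / (4 * Real.pi * Real.log ((α - θ) / ε)) ^ ((N : ℝ) / 2) *
              (∫ y in {y : EuclideanSpace ℝ (Fin N) | ‖y‖ < L},
                Real.exp (-‖x - y‖ ^ 2 / (4 * Real.log ((α - θ) / ε)))) - θ) := by
  have hκ : 2 < (1 - k) * γ := (div_lt_iff₀ (by linarith)).1 (lt_sub_comm.1 hk)
  obtain ⟨ε₀, hε₀, h⟩ := toy_non_extinction_general (E := EuclideanSpace ℝ (Fin N))
    (hθα'.trans hα'α) hα'α hκ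
  refine ⟨ε₀, hε₀, fun ε hε hεε₀ _ L hL x hx ↦ ?_⟩
  have hball : Metric.ball x ((1 - k) * γ * √(log ((α - θ) / ε) * log (1 / ε))) ⊆
      {y | ‖y‖ < L} := by
    rw [← ball_zero_eq]
    exact Metric.ball_subset_ball' (by rw [dist_zero_right]; linarith)
  simpa only [toySolution_eq_integral_exp, finrank_euclideanSpace_fin] using
    h ε hε hεε₀ _ (measurableSet_lt measurable_norm measurable_const) x hball
end
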